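/- arXiv:1803.06457 — 5 statements merged into one kernel-verified Lean document; each statement's English description precedes it below -/
import Mathlib

section
/- Let V be a real vector space, let p ∈ (0, 1], and let σ : V → ℝ be a p-homogeneous seminorm on V. Let (x_n)_{n∈ℕ} be a sequence in V such that σ(2·x_{n+1} − x_n) → 0 as n → ∞. Then σ(x_n) → 0 as n → ∞. -/
/-!
With `c = 2 ^ p > 1`, homogeneity and the triangle inequality give
`c * σ (x (n + 1)) ≤ σ (x n) + σ (2 • x (n + 1) - x n)`. Such a recursion with vanishing
perturbation forces `σ (x n) → 0`: once the perturbation is at most `(c - 1) * ε`, the excess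
`σ (x n) - ε` shrinks by a factor `c` at each step.
-/

open Filter Topology

theorem tendsto_zero_of_mul_succ_le {a e : ℕ → ℝ} {c : ℝ} (hc : 1 < c) (ha : ∀ n, 0 ≤ a n)
    (hrec : ∀ n, c * a (n + 1) ≤ a n + e n) (he : Tendsto e atTop (𝓝 0)) :
    Tendsto a atTop (𝓝 0) := by
  rw [Metric.tendsto_atTop]
  intro η hη
  obtain ⟨ε, hε, rfl⟩ : ∃ ε > 0, η = 2 * ε := ⟨η / 2, by linarith, by ring⟩
  have hc0 : 0 < c := by linarith
  have hδ : 0 < (c - 1) * ε := mul_pos (by linarith) hε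
  obtain ⟨N, hN⟩ := eventually_atTop.1 (he.eventually (gt_mem_nhds hδ))
  have hgeom : ∀ k, a (N + k) - ε ≤ c⁻¹ ^ k * a N := by
    intro k
    induction k with
    | zero => simp [hε.le]
    | succ k ih =>
      have h1 := hrec (N + k)
      have h2 := hN (N + k) (by omega)
      have h3 : c * (a (N + k + 1) - ε) ≤ c⁻¹ ^ k * a N := by linarith
      calc a (N + k + 1) - ε = c⁻¹ * (c * (a (N + k + 1) - ε)) := by field_simp
        _ ≤ c⁻¹ * (c⁻¹ ^ k * a N) := by gcongr
        _ = c⁻¹ ^ (k + 1) * a N := by ring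
  have hlim : Tendsto (fun k : ℕ => c⁻¹ ^ k * a N) atTop (𝓝 0) := by
    simpa using (tendsto_pow_atTop_nhds_zero_of_lt_one (inv_nonneg.2 hc0.le)
      (inv_lt_one_of_one_lt₀ hc)).mul_const (a N)
  obtain ⟨K, hK⟩ := eventually_atTop.1 (hlim.eventually (gt_mem_nhds hε))
  refine ⟨N + K, fun n hn => ?_⟩
  obtain ⟨k, rfl⟩ : ∃ k, n = N + k := ⟨n - N, by omega⟩
  rw [Real.dist_eq, sub_zero, abs_of_nonneg (ha _)]
  linarith [hgeom k, hK k (by omega)]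

/-- If `σ` is a `p`-homogeneous seminorm (`p ∈ (0,1]`) on a real vector space and
`σ(2·x_{n+1} − x_n) → 0`, then `σ(x_n) → 0`. -/
theorem stmt1 {V : Type*} [AddCommGroup V] [Module ℝ V]
    (p : ℝ) (hp0 : 0 < p) (hp1 : p ≤ 1)
    (σ : V → ℝ) (hnonneg : ∀ v, 0 ≤ σ v)
    (htri : ∀ v w, σ (v + w) ≤ σ v + σ w)
    (hhom : ∀ (k : ℝ) (v : V), σ (k • v) = |k| ^ p * σ v)
    (x : ℕ → V)
    (h : Tendsto (fun n => σ ((2 : ℝ) • x (n + 1) - x n)) atTop (𝓝 0)) :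
    Tendsto (fun n => σ (x n)) atTop (𝓝 0) := by
  refine tendsto_zero_of_mul_succ_le (Real.one_lt_rpow one_lt_two hp0) (fun n => hnonneg _)
    (fun n => ?_) h
  have h1 := htri (x n) ((2 : ℝ) • x (n + 1) - x n)
  rwa [add_sub_cancel, hhom, abs_of_pos two_pos] at h1
end

section
/- Let V be a real vector space, let p ∈ (0, 1], let σ : V → ℝ be a p-homogeneous seminorm on V, and let (x_n)_{n∈ℕ} be a sequence in V. Then for every N ∈ ℕ and every m ∈ ℕ with m ≥ 1, one has σ(x_{N+m} − (1/2^m) • x_N) ≤ Σ_{k=1}^{m} (1/2^{(m+1−k)·p}) · σ(2·x_{N+k} − x_{N+k−1}). -/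
/-!
The estimate telescopes by induction on `m`, through the identity
`x_{N+m+1} - 2^{-(m+1)} x_N = ½ (x_{N+m} - 2^{-m} x_N) + ½ (2 x_{N+m+1} - x_{N+m})`:
by `p`-homogeneity each factor `½` comes out of `σ` as `2^{-p}`, which raises the exponent of every
earlier summand by `p` and gives the new summand its weight.
-/


open Filter Topology

/-- Telescoping estimate: for a `p`-homogeneous seminorm `σ` (`p ∈ (0,1]`),
`σ(x_{N+m} − (1/2^m) • x_N) ≤ Σ_{k=1}^{m} (1/2^{(m+1−k)·p}) · σ(2·x_{N+k} − x_{N+k−1})`. -/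
theorem stmt2 {V : Type*} [AddCommGroup V] [Module ℝ V]
    (p : ℝ) (hp0 : 0 < p) (hp1 : p ≤ 1)
    (σ : V → ℝ) (hnonneg : ∀ v, 0 ≤ σ v)
    (htri : ∀ v w, σ (v + w) ≤ σ v + σ w)
    (hhom : ∀ (k : ℝ) (v : V), σ (k • v) = |k| ^ p * σ v)
    (x : ℕ → V) (N m : ℕ) (hm : 1 ≤ m) :
    σ (x (N + m) - ((1 : ℝ) / 2 ^ m) • x N) ≤
      ∑ k ∈ Finset.Icc 1 m,
        (1 / (2 : ℝ) ^ (((m + 1 - k : ℕ) : ℝ) * p)) *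
          σ ((2 : ℝ) • x (N + k) - x (N + k - 1)) := by
  -- The claim also holds for `m = 0`, where the sum is empty and `σ 0 = 0`.
  clear hm
  induction m with
  | zero =>
    have h0 : σ 0 = 0 := by
      have h := hhom 0 0
      rwa [zero_smul, abs_zero, Real.zero_rpow hp0.ne', zero_mul] at h
    simp [h0]
  | succ m ih =>
    have hhalf : |(1 / 2 : ℝ)| ^ p = 1 / (2 : ℝ) ^ p := by
      rw [abs_of_pos (by norm_num), Real.div_rpow (by norm_num) (by norm_num), Real.one_rpow]
    have hsplit : x (N + (m + 1)) - ((1 : ℝ) / 2 ^ (m + 1)) • x N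
        = (1 / 2 : ℝ) • (x (N + m) - ((1 : ℝ) / 2 ^ m) • x N)
          + (1 / 2 : ℝ) • ((2 : ℝ) • x (N + (m + 1)) - x (N + m)) := by
      rw [pow_succ]
      module
    rw [hsplit, Finset.sum_Icc_succ_top (by omega)]
    refine (htri _ _).trans (add_le_add ?_ ?_)
    · rw [hhom, hhalf]
      refine (mul_le_mul_of_nonneg_left ih (by positivity)).trans_eq ?_
      rw [Finset.mul_sum]
      refine Finset.sum_congr rfl fun k hk => ?_
      have hk' := (Finset.mem_Icc.mp hk).2
      have hexp : m + 1 + 1 - k = (m + 1 - k) + 1 := by omega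
      rw [hexp, Nat.cast_succ, add_mul, one_mul, Real.rpow_add (by norm_num)]
      ring
    · rw [hhom, hhalf]
      simp [← add_assoc]
end

section
/- Let (Ω, Σ, P) be a probability space and let (S_n)_{n≥1} be a mutually independent family of measurable subsets of Ω with P(S_k) = 1/k for every k ≥ 1. Define Y_k = 2^k · χ_{S_k} and define X_1 = 0 and X_n = Σ_{k=1}^{n−1} (1/2^{n−k}) · Y_k for n ≥ 2. Then for every n ≥ 1, P({ω ∈ Ω : |X_{2n+1}(ω)| > 1/2}) ≥ 1/2. -/
/-!
Since `X_{2n+1} = Σ_{k=1}^{2n} 2^{2k-2n-1} χ_{S_k}`, every point of `S_k` with `n < k ≤ 2n` satisfies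
`X_{2n+1} ≥ 2^{2k-2n-1} > 1/2`. Hence the event `|X_{2n+1}| ≤ 1/2` is contained in
`⋂_{n < k ≤ 2n} S_kᶜ`, whose probability is, by independence of the complements, the telescoping
product `∏_{n < k ≤ 2n} (1 - 1/k) = n / (2n) = 1/2`.
-/

open Filter Topology MeasureTheory

theorem prod_Ico_telescope (n m : ℕ) (hn : 1 ≤ n) :
    ∏ k ∈ Finset.Ico n (n + m), (1 - 1 / ((k : ℝ) + 1)) = n / (n + m) := by
  have hn' : (0 : ℝ) < n := by exact_mod_cast hn
  induction m with
  | zero => simp [hn'.ne']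
  | succ m ih =>
    rw [← add_assoc, Finset.prod_Ico_succ_top (by omega), ih]
    push_cast
    field_simp
    ring

/-- The index is shifted by one because independence is only assumed for indices `k ≥ 1`. -/
theorem measureReal_iInter_compl {Ω : Type*} [MeasurableSpace Ω] (P : Measure Ω)
    [IsProbabilityMeasure P]
    (S : ℕ → Set Ω) (hS : ∀ n, 1 ≤ n → MeasurableSet (S n))
    (hInd : ∀ F : Finset ℕ, (∀ k ∈ F, 1 ≤ k) →
      P (⋂ k ∈ F, S k) = ∏ k ∈ F, P (S k))
    (hP : ∀ k : ℕ, 1 ≤ k → P (S k) = 1 / k) (F : Finset ℕ) :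
    P.real (⋂ k ∈ F, (S (k + 1))ᶜ) = ∏ k ∈ F, (1 - 1 / ((k : ℝ) + 1)) := by
  have hm : ∀ k, MeasurableSet (S (k + 1)) := fun k => hS _ (by omega)
  have hI : ProbabilityTheory.iIndepSet (fun k => S (k + 1)) P := by
    rw [ProbabilityTheory.iIndepSet_iff_meas_biInter hm]
    intro G
    have h := hInd (G.map (addRightEmbedding 1)) (by simp)
    simpa using h
  have h : P (⋂ k ∈ F, (S (k + 1))ᶜ) = ∏ k ∈ F, P (S (k + 1))ᶜ :=
    ProbabilityTheory.iIndep.meas_biInter hI fun k _ =>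
      (MeasurableSpace.measurableSet_generateFrom (Set.mem_singleton _)).compl
  rw [measureReal_def, h, ENNReal.toReal_prod]
  refine Finset.prod_congr rfl fun k _ => ?_
  rw [← measureReal_def, probReal_compl_eq_one_sub (hm k), measureReal_def, hP _ (by omega), ENNReal.toReal_div, ENNReal.toReal_natCast]
  simp

/-- With `(S_n)_{n≥1}` mutually independent, `P(S_k) = 1/k`, `Y_k = 2^k · χ_{S_k}`,
`X_1 = 0` and `X_n = Σ_{k=1}^{n−1} (1/2^{n−k}) · Y_k` for `n ≥ 2`, one has
`P(|X_{2n+1}| > 1/2) ≥ 1/2` for every `n ≥ 1`. -/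
theorem stmt10 {Ω : Type*} [MeasurableSpace Ω] (P : Measure Ω) [IsProbabilityMeasure P]
    (S : ℕ → Set Ω) (hS : ∀ n, 1 ≤ n → MeasurableSet (S n))
    (hInd : ∀ F : Finset ℕ, (∀ k ∈ F, 1 ≤ k) →
      P (⋂ k ∈ F, S k) = ∏ k ∈ F, P (S k))
    (hP : ∀ k : ℕ, 1 ≤ k → P (S k) = 1 / k)
    (Y : ℕ → Ω → ℝ)
    (hY : ∀ k, 1 ≤ k → Y k = fun ω => (2 : ℝ) ^ k * (S k).indicator 1 ω)
    (X : ℕ → Ω → ℝ) (hX1 : X 1 = 0)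
    (hX : ∀ n, 2 ≤ n →
      X n = fun ω => ∑ k ∈ Finset.Icc 1 (n - 1), ((1 : ℝ) / 2 ^ (n - k)) * Y k ω) :
    ∀ n : ℕ, 1 ≤ n → P {ω | |X (2 * n + 1) ω| > 1 / 2} ≥ 1 / 2 := by
  intro n hn
  set E : Set Ω := ⋂ k ∈ Finset.Ico n (n + n), (S (k + 1))ᶜ with hE
  have hEm : MeasurableSet E :=
    Finset.measurableSet_biInter _ fun k _ => (hS _ (by omega)).compl
  have hPE : P.real Eᶜ = 1 / 2 := by
    rw [probReal_compl_eq_one_sub hEm, hE, measureReal_iInter_compl P S hS hInd hP,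
      prod_Ico_telescope n n hn]
    have : (n : ℝ) ≠ 0 := by positivity
    field_simp
    norm_num
  have hPE' : P Eᶜ = 1 / 2 := by
    rw [← ENNReal.ofReal_toReal (measure_ne_top P Eᶜ), ← measureReal_def, hPE,
      ENNReal.ofReal_div_of_pos (by norm_num)]
    simp
  rw [ge_iff_le, ← hPE']
  refine measure_mono fun ω hω => ?_
  simp only [hE, Set.mem_compl_iff, Set.mem_iInter, Finset.mem_Ico, not_forall, not_not] at hω
  obtain ⟨j, ⟨hj1, hj2⟩, hj⟩ := hω
  have hnn : ∀ k ∈ Finset.Icc 1 (2 * n + 1 - 1),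
      0 ≤ ((1 : ℝ) / 2 ^ (2 * n + 1 - k)) * Y k ω := by
    intro k hk
    rw [hY k (Finset.mem_Icc.1 hk).1]
    have : (0 : ℝ) ≤ (S k).indicator 1 ω := Set.indicator_nonneg (fun _ _ => zero_le_one) _
    positivity
  have hle := Finset.single_le_sum hnn
    (show j + 1 ∈ Finset.Icc 1 (2 * n + 1 - 1) from Finset.mem_Icc.2 ⟨by omega, by omega⟩)
  -- The summand of index `j + 1 > n` is at least `1`, as `2n + 1 - (j + 1) ≤ j + 1`.
  have hone : 1 ≤ ((1 : ℝ) / 2 ^ (2 * n + 1 - (j + 1))) * Y (j + 1) ω := by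
    rw [hY (j + 1) (by omega)]
    simp only [Set.indicator_of_mem hj, Pi.one_apply, mul_one]
    rw [one_div_mul_eq_div, one_le_div (by positivity)]
    exact pow_le_pow_right₀ one_le_two (by omega)
  rw [Set.mem_ofPred_eq, hX _ (by omega)]
  exact lt_of_lt_of_le (by norm_num) ((hone.trans hle).trans (le_abs_self _))
end

section
/- Let (Ω, Σ, P) be a probability space and let (S_n)_{n≥1} be a mutually independent family of measurable subsets of Ω with P(S_k) = 1/k for every k ≥ 1. Define Y_k = 2^k · χ_{S_k}, and define X_1 = 0 and X_n = Σ_{k=1}^{n−1} (1/2^{n−k}) · Y_k for n ≥ 2. Then the sequence (2·X_{n+1} − X_n)_{n≥1} converges to the zero function in probability, but (X_n)_{n≥1} does not converge to the zero function in probability. -/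
open Filter Topology MeasureTheory

/-!
The sum telescopes: `2 * X (n + 1) - X n = Y n`, and `Y n` vanishes off `S n`, a set of
probability `1 / n`; this gives the convergence of `2 * X (n + 1) - X n`.

For the failure of convergence of `X n`, take `n = 2 * m`. The coefficient of the indicator of `S k`
in `X n` is `2 ^ (2 * k - n)`, so `X n ≥ 1` on each `S k` with `m ≤ k < 2 * m`. By independence of
the complements, none of these events occurs with probability
`∏ (1 - 1 / k) = (m - 1) / (2 * m - 1) ≤ 1 / 2`, hence `P (X n ≥ 1) ≥ 1 / 2` for all even `n`.
-/

/-- Independence passes to complements. The sets are shifted by one, so that the independent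
family is indexed by all of `ℕ`. -/
lemma measureReal_biInter_compl {Ω : Type*} [MeasurableSpace Ω] (P : Measure Ω)
    [IsProbabilityMeasure P] (S : ℕ → Set Ω) (hS : ∀ n, 1 ≤ n → MeasurableSet (S n))
    (hInd : ∀ F : Finset ℕ, (∀ k ∈ F, 1 ≤ k) →
      P (⋂ k ∈ F, S k) = ∏ k ∈ F, P (S k))
    (hP : ∀ k : ℕ, 1 ≤ k → P (S k) = 1 / k) (F : Finset ℕ) :
    P.real (⋂ j ∈ F, (S (j + 1))ᶜ) = ∏ j ∈ F, (1 - 1 / ((j : ℝ) + 1)) := by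
  have hT : ∀ j, MeasurableSet (S (j + 1)) := fun j => hS _ (by omega)
  have hind : ProbabilityTheory.iIndepSet (fun j => S (j + 1)) P := by
    rw [ProbabilityTheory.iIndepSet_iff_meas_biInter hT]
    intro G
    have h := hInd (G.map (addRightEmbedding 1)) (by simp)
    simpa using h
  have h := ProbabilityTheory.iIndep.meas_biInter (S := F) (s := fun j => (S (j + 1))ᶜ)
    ((ProbabilityTheory.iIndepSet_iff_iIndep _ P).mp hind)
    (fun j _ => (MeasurableSpace.measurableSet_generateFrom (Set.mem_singleton _)).compl)
  rw [Measure.real, h, ENNReal.toReal_prod]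
  refine Finset.prod_congr rfl fun j _ => ?_
  change P.real (S (j + 1))ᶜ = _
  rw [probReal_compl_eq_one_sub (hT j), Measure.real, hP _ (by omega), one_div,
    ENNReal.toReal_inv, ENNReal.toReal_natCast]
  push_cast
  rw [one_div]

lemma prod_Ico_one_sub (a d : ℕ) (ha : 1 ≤ a) :
    ∏ j ∈ Finset.Ico a (a + d), (1 - 1 / ((j : ℝ) + 1)) = a / (a + d) := by
  have ha' : (0 : ℝ) < a := by exact_mod_cast ha
  induction d with
  | zero => simp [ha'.ne']
  | succ d ih =>
    rw [← add_assoc, Finset.prod_Ico_succ_top (by omega), ih]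
    push_cast
    field_simp
    ring

/-- With `(S_n)_{n≥1}` mutually independent, `P(S_k) = 1/k`, `Y_k = 2^k · χ_{S_k}`,
`X_1 = 0` and `X_n = Σ_{k=1}^{n−1} (1/2^{n−k}) · Y_k` for `n ≥ 2`: the sequence
`(2·X_{n+1} − X_n)` converges to `0` in probability, but `(X_n)` does not. -/
theorem stmt11 {Ω : Type*} [MeasurableSpace Ω] (P : Measure Ω) [IsProbabilityMeasure P]
    (S : ℕ → Set Ω) (hS : ∀ n, 1 ≤ n → MeasurableSet (S n))
    (hInd : ∀ F : Finset ℕ, (∀ k ∈ F, 1 ≤ k) →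
      P (⋂ k ∈ F, S k) = ∏ k ∈ F, P (S k))
    (hP : ∀ k : ℕ, 1 ≤ k → P (S k) = 1 / k)
    (Y : ℕ → Ω → ℝ)
    (hY : ∀ k, 1 ≤ k → Y k = fun ω => (2 : ℝ) ^ k * (S k).indicator 1 ω)
    (X : ℕ → Ω → ℝ) (hX1 : X 1 = 0)
    (hX : ∀ n, 2 ≤ n →
      X n = fun ω => ∑ k ∈ Finset.Icc 1 (n - 1), ((1 : ℝ) / 2 ^ (n - k)) * Y k ω) :
    (∀ ε : ℝ, 0 < ε →
        Tendsto (fun n => P {ω | |2 * X (n + 1) ω - X n ω| > ε}) atTop (𝓝 0)) ∧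
      ¬ (∀ ε : ℝ, 0 < ε →
        Tendsto (fun n => P {ω | |X n ω| > ε}) atTop (𝓝 0)) := by
  have hYnn : ∀ k, 1 ≤ k → ∀ ω, 0 ≤ Y k ω := by
    intro k hk ω
    rw [hY k hk]
    exact mul_nonneg (by positivity) (Set.indicator_nonneg (fun _ _ => zero_le_one) ω)
  -- The formula for `X n` also holds at `n = 1`, where the sum is empty.
  have hX' : ∀ n, 1 ≤ n → ∀ ω,
      X n ω = ∑ k ∈ Finset.Icc 1 (n - 1), ((1 : ℝ) / 2 ^ (n - k)) * Y k ω := by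
    intro n hn ω
    rcases Nat.lt_or_ge n 2 with h | h
    · obtain rfl : n = 1 := by omega
      simp [hX1]
    · rw [hX n h]
  have hrec : ∀ n, 1 ≤ n → ∀ ω, 2 * X (n + 1) ω - X n ω = Y n ω := by
    intro n hn ω
    obtain ⟨m, rfl⟩ : ∃ m, n = m + 1 := ⟨n - 1, by omega⟩
    rw [hX' _ hn, hX' _ (by omega)]
    simp only [Nat.add_sub_cancel]
    rw [Finset.sum_Icc_succ_top (by omega), mul_add, Finset.mul_sum]
    have hsum : ∑ k ∈ Finset.Icc 1 m, 2 * ((1 : ℝ) / 2 ^ (m + 1 + 1 - k) * Y k ω) =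
        ∑ k ∈ Finset.Icc 1 m, ((1 : ℝ) / 2 ^ (m + 1 - k)) * Y k ω := by
      refine Finset.sum_congr rfl fun k hk => ?_
      have hk' := (Finset.mem_Icc.mp hk).2
      rw [show m + 1 + 1 - k = (m + 1 - k) + 1 by omega, pow_succ]
      field_simp
    rw [hsum, show m + 1 + 1 - (m + 1) = 1 by omega]
    ring
  refine ⟨fun ε hε => ?_, fun hconv => ?_⟩
  · refine tendsto_of_tendsto_of_tendsto_of_le_of_le' tendsto_const_nhds
      ENNReal.tendsto_inv_nat_nhds_zero (Eventually.of_forall fun _ => zero_le) ?_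
    filter_upwards [eventually_ge_atTop 1] with n hn
    rw [← one_div, ← hP n hn]
    refine measure_mono fun ω hω => ?_
    by_contra hnot
    have h0 : Y n ω = 0 := by simp [hY n hn, hnot]
    simp only [Set.mem_ofPred_eq, hrec n hn, h0, abs_zero] at hω
    linarith
  · have hlow : ∀ a : ℕ, 1 ≤ a →
        (1 / 2 : ℝ) ≤ P.real {ω | |X (2 * (a + 1)) ω| > 1 / 2} := by
      intro a ha
      set I := Finset.Ico a (a + (a + 1)) with hI
      have hmeas : MeasurableSet (⋂ j ∈ I, (S (j + 1))ᶜ) :=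
        Finset.measurableSet_biInter _ fun j _ => (hS _ (by omega)).compl
      have hsub : (⋂ j ∈ I, (S (j + 1))ᶜ)ᶜ ⊆ {ω | |X (2 * (a + 1)) ω| > 1 / 2} := by
        intro ω hω
        simp only [Set.mem_compl_iff, Set.mem_iInter, not_forall, not_not] at hω
        obtain ⟨j, hj, hjω⟩ := hω
        rw [hI, Finset.mem_Ico] at hj
        have hterm : (1 : ℝ) ≤ 1 / 2 ^ (2 * (a + 1) - (j + 1)) * Y (j + 1) ω := by
          rw [hY _ (by omega)]
          simp only [Set.indicator_of_mem hjω, Pi.one_apply, mul_one]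
          rw [one_div_mul_eq_div, one_le_div (by positivity)]
          exact pow_le_pow_right₀ (by norm_num) (by omega)
        have hle := Finset.single_le_sum
          (f := fun k => (1 : ℝ) / 2 ^ (2 * (a + 1) - k) * Y k ω)
          (s := Finset.Icc 1 (2 * (a + 1) - 1))
          (fun k hk => mul_nonneg (by positivity) (hYnn k (Finset.mem_Icc.mp hk).1 ω))
          (Finset.mem_Icc.mpr ⟨by omega, by omega⟩ : j + 1 ∈ _)
        rw [← hX' _ (by omega)] at hle
        have hone := hterm.trans hle
        change |X (2 * (a + 1)) ω| > 1 / 2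
        have := le_abs_self (X (2 * (a + 1)) ω)
        linarith
      refine le_trans ?_ (measureReal_mono hsub)
      rw [probReal_compl_eq_one_sub hmeas, measureReal_biInter_compl P S hS hInd hP,
        hI, prod_Ico_one_sub a (a + 1) ha]
      have : (a : ℝ) / (a + ((a + 1 : ℕ) : ℝ)) ≤ 1 / 2 := by
        push_cast
        rw [div_le_div_iff₀ (by positivity) (by norm_num)]
        linarith
      linarith
    have hsub : Tendsto (fun a : ℕ => 2 * (a + 1)) atTop atTop :=
      tendsto_atTop_mono (fun a => (by omega : a ≤ 2 * (a + 1))) tendsto_id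
    have hlim := (ENNReal.tendsto_toReal ENNReal.zero_ne_top).comp
      ((hconv (1 / 2) (by norm_num)).comp hsub)
    have := ge_of_tendsto hlim (b := (1 / 2 : ℝ))
      ((eventually_ge_atTop 1).mono fun a ha => hlow a ha)
    norm_num at this
end

section
/- There exist a probability space (Ω, Σ, P) and a sequence (X_n)_{n≥1} of measurable real-valued functions on Ω such that the sequence (2·X_{n+1} − X_n)_{n≥1} converges to the zero function in probability, but for every measurable function X : Ω → ℝ, the sequence (X_n)_{n≥1} does not converge to X in probability. -/
open Filter Topology MeasureTheory

/-!
On `[0, 1]` with Lebesgue measure let `X n ω = 4 ^ ((m + 1) ^ 2) / 2 ^ n`, where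
`m = ⌊√n + ω⌋`. Then `2 * X (n + 1) ω - X n ω` vanishes unless an integer lies in
`(√n + ω, √(n + 1) + ω]`, which happens with probability at most
`2 * (√(n + 1) - √n) → 0` (`change_prob`). On the other hand `n ≤ (m + 1) ^ 2`, so
`X n ω ≥ 2 ^ n` everywhere on `[0, 1]` (`seqX_lower`). Hence `X n → ∞` pointwise, and no
subsequence converges almost everywhere, so there is no limit in probability.
-/

/-- The counterexample sequence, on all of `ℝ`; only its values on `[0, 1]` matter. -/
noncomputable def seqX (n : ℕ) (ω : ℝ) : ℝ :=
  (4 : ℝ) ^ ((⌊√(n : ℝ) + ω⌋₊ + 1) ^ 2) / 2 ^ n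

lemma seqX_measurable (n : ℕ) : Measurable (seqX n) := by
  have h : Measurable fun ω : ℝ => ⌊√(n : ℝ) + ω⌋₊ :=
    Nat.measurable_floor.comp (measurable_const.add measurable_id)
  have h2 : Measurable fun m : ℕ => (4 : ℝ) ^ ((m + 1) ^ 2) / 2 ^ n := measurable_from_top
  exact h2.comp h

lemma seqX_lower (n : ℕ) {ω : ℝ} (hω : 0 ≤ ω) : (2 : ℝ) ^ n ≤ seqX n ω := by
  unfold seqX
  set m := ⌊√(n : ℝ) + ω⌋₊ with hm
  have h1 : √(n : ℝ) + ω < m + 1 := Nat.lt_floor_add_one _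
  have h2 : √(n : ℝ) ^ 2 = n := Real.sq_sqrt (Nat.cast_nonneg n)
  have h3 : (n : ℝ) ≤ ((m + 1) ^ 2 : ℕ) := by
    push_cast
    rw [← h2]
    have := Real.sqrt_nonneg (n : ℝ)
    gcongr
    linarith
  have h4 : n ≤ (m + 1) ^ 2 := by exact_mod_cast h3
  rw [le_div_iff₀ (by positivity), ← mul_pow]
  norm_num
  exact pow_le_pow_right₀ (by norm_num) h4

lemma sqrt_diff_bound (n : ℕ) : √((n : ℝ) + 1) - √(n : ℝ) ≤ 1 / √((n : ℝ) + 1) := by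
  have h1 : √(n : ℝ) ^ 2 = n := Real.sq_sqrt (Nat.cast_nonneg n)
  have h2 : √((n : ℝ) + 1) ^ 2 = n + 1 := Real.sq_sqrt (by positivity)
  have h3 : √(n : ℝ) ≤ √((n : ℝ) + 1) := Real.sqrt_le_sqrt (by linarith)
  have h4 := Real.sqrt_nonneg (n : ℝ)
  rw [le_div_iff₀ (by positivity)]
  nlinarith

/-- The floors `⌊√n + ω⌋` and `⌊√(n + 1) + ω⌋` can differ only if one of the integers `⌊√n⌋ + 1`, `⌊√n⌋ + 2` lies in
`(√n + ω, √(n + 1) + ω]`; each of these confines `ω` to an interval of length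
`√(n + 1) - √n`. -/
lemma change_prob (n : ℕ) (ε : ℝ) (hε : 0 < ε) :
    volume.restrict (Set.Icc (0 : ℝ) 1) {ω | |2 * seqX (n + 1) ω - seqX n ω| > ε}
      ≤ ENNReal.ofReal (2 * (1 / √((n : ℝ) + 1))) := by
  set a := √(n : ℝ) with ha
  set b := √((n : ℝ) + 1) with hb
  have hab : a ≤ b := Real.sqrt_le_sqrt (by linarith)
  have ha0 : 0 ≤ a := Real.sqrt_nonneg _
  have hd : b - a ≤ 1 / b := sqrt_diff_bound n
  have hb1 : 1 ≤ b := Real.one_le_sqrt.2 (by linarith [Nat.cast_nonneg (α := ℝ) n])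
  have hd1 : b - a ≤ 1 := hd.trans ((div_le_one (by linarith)).2 hb1)
  set N := ⌊a⌋₊ with hN
  have hN1 : (N : ℝ) ≤ a := Nat.floor_le ha0
  have hN2 : a < N + 1 := Nat.lt_floor_add_one _
  rw [Measure.restrict_apply' measurableSet_Icc]
  have hsub : {ω | |2 * seqX (n + 1) ω - seqX n ω| > ε} ∩ Set.Icc (0 : ℝ) 1 ⊆
      Set.Ico ((N : ℝ) + 1 - b) (N + 1 - a) ∪ Set.Ico ((N : ℝ) + 2 - b) (N + 2 - a) := by
    rintro ω ⟨h, h0, h1⟩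
    have hne : ⌊a + ω⌋₊ ≠ ⌊b + ω⌋₊ := by
      intro heq
      have : 2 * seqX (n + 1) ω - seqX n ω = 0 := by
        unfold seqX
        push_cast
        rw [← ha, ← hb, heq, pow_succ]
        field_simp
        ring
      simp only [Set.mem_ofPred_eq, this, abs_zero] at h
      linarith
    have hlt : ⌊a + ω⌋₊ < ⌊b + ω⌋₊ :=
      lt_of_le_of_ne (Nat.floor_mono (by linarith)) hne
    set k := ⌊b + ω⌋₊ with hk
    have hk1 : (k : ℝ) ≤ b + ω := Nat.floor_le (by linarith)
    have hk2 : a + ω < k := (Nat.floor_lt (by linarith)).1 hlt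
    have hk3 : N < k := by
      have : (N : ℝ) < k := by linarith
      exact_mod_cast this
    have hk4 : k < N + 3 := by
      have : (k : ℝ) < ((N + 3 : ℕ) : ℝ) := by push_cast; linarith
      exact_mod_cast this
    obtain h | h : k = N + 1 ∨ k = N + 2 := by omega
    · left
      rw [h] at hk1 hk2
      push_cast at hk1 hk2
      constructor <;> linarith
    · right
      rw [h] at hk1 hk2
      push_cast at hk1 hk2
      constructor <;> linarith
  calc _ ≤ _ := measure_mono hsub
    _ ≤ _ := measure_union_le _ _
    _ = ENNReal.ofReal (2 * (b - a)) := by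
      rw [Real.volume_Ico, Real.volume_Ico, ← ENNReal.ofReal_add (by linarith) (by linarith)]
      congr 1
      ring
    _ ≤ _ := ENNReal.ofReal_le_ofReal (by linarith)

/-- There exist a probability space and measurable `X_n : Ω → ℝ` such that
`(2·X_{n+1} − X_n)` converges to `0` in probability, while `(X_n)` converges to no
measurable function in probability. -/
theorem stmt13 :
    ∃ (Ω : Type) (_ : MeasurableSpace Ω) (P : Measure Ω),
      IsProbabilityMeasure P ∧
      ∃ X : ℕ → Ω → ℝ,
        (∀ n, Measurable (X n)) ∧
        (∀ ε : ℝ, 0 < ε →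
          Tendsto (fun n => P {ω | |2 * X (n + 1) ω - X n ω| > ε}) atTop (𝓝 0)) ∧
        (∀ Z : Ω → ℝ, Measurable Z →
          ¬ (∀ ε : ℝ, 0 < ε →
            Tendsto (fun n => P {ω | |X n ω - Z ω| > ε}) atTop (𝓝 0))) := by
  have hP : IsProbabilityMeasure (volume.restrict (Set.Icc (0 : ℝ) 1)) :=
    ⟨by simp⟩
  refine ⟨ℝ, inferInstance, volume.restrict (Set.Icc (0 : ℝ) 1), hP, seqX, seqX_measurable,
    fun ε hε => ?_, fun Z _ hconv => ?_⟩
  · have hlim : Tendsto (fun n : ℕ => 2 * (1 / √((n : ℝ) + 1))) atTop (𝓝 0) := by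
      have h : Tendsto (fun n : ℕ => √((n : ℝ) + 1)) atTop atTop :=
        Real.tendsto_sqrt_atTop.comp
          (tendsto_atTop_add_const_right _ _ tendsto_natCast_atTop_atTop)
      simpa using (h.inv_tendsto_atTop).const_mul 2
    have hlim' := ENNReal.tendsto_ofReal hlim
    rw [ENNReal.ofReal_zero] at hlim'
    exact tendsto_of_tendsto_of_tendsto_of_le_of_le tendsto_const_nhds hlim'
      (fun _ => zero_le) (fun n => change_prob n ε hε)
  · have hm : TendstoInMeasure (volume.restrict (Set.Icc (0 : ℝ) 1)) seqX atTop Z := by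
      rw [tendstoInMeasure_iff_dist]
      intro ε hε
      -- `TendstoInMeasure` uses the non-strict `ε ≤ dist`, hence the halved threshold.
      refine tendsto_of_tendsto_of_tendsto_of_le_of_le tendsto_const_nhds
        (hconv (ε / 2) (half_pos hε)) (fun _ => zero_le) (fun n => measure_mono ?_)
      intro ω hω
      simp only [Set.mem_ofPred_eq, Real.dist_eq] at hω ⊢
      linarith
    obtain ⟨ns, hns, hae⟩ := hm.exists_seq_tendsto_ae
    have hmem : ∀ᵐ ω ∂(volume.restrict (Set.Icc (0 : ℝ) 1)), ω ∈ Set.Icc (0 : ℝ) 1 :=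
      ae_restrict_mem measurableSet_Icc
    obtain ⟨ω, h1, h2⟩ := (hae.and hmem).exists
    have htop : Tendsto (fun i => seqX (ns i) ω) atTop atTop :=
      tendsto_atTop_mono (fun i => seqX_lower (ns i) h2.1)
        ((tendsto_pow_atTop_atTop_of_one_lt (by norm_num : (1 : ℝ) < 2)).comp
          hns.tendsto_atTop)
    exact not_tendsto_nhds_of_tendsto_atTop htop _ h1
end
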